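/- Let G and G' be achievement positional games on disjoint vertex sets. If o(G)=L^- and o(G')=R^-, then o(G∪G')∈{L^-, N, R^-}. -/

import Mathlib

namespace APG

/-- The two players: Left and Right. -/
inductive Player : Type
  | L : Player
  | R : Player
deriving DecidableEq, Repr

/-- The opponent of a player. -/
def Player.other : Player → Player
  | .L => .R
  | .R => .L

/-- An achievement positional game: a finite vertex set together with the set of
blue edges (Left's winning sets) and the set of red edges (Right's winning sets). -/
structure Game : Type where
  V : Finset ℕ
  EL : Finset (Finset ℕ)
  ER : Finset (Finset ℕ)

/-- The edges are nonempty subsets of the vertex set. -/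
def WellFormed (G : Game) : Prop :=
  (∀ e ∈ G.EL, e ⊆ G.V ∧ e.Nonempty) ∧ (∀ e ∈ G.ER, e ⊆ G.V ∧ e.Nonempty)

/-- The winning sets of a given player. -/
def Game.edges (G : Game) : Player → Finset (Finset ℕ)
  | .L => G.EL
  | .R => G.ER

/-- The player who makes the `i`-th move (0-indexed) when `s` moves first. -/
def mover (s : Player) (i : ℕ) : Player := if i % 2 = 0 then s else s.other

/-- The set of vertices picked by player `p` along the history `h`
(the chronological list of the moves played so far), when `s` moved first. -/
def picked (s p : Player) (h : List ℕ) : Finset ℕ :=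
  ((Finset.range h.length).filter fun i => mover s i = p).image fun i => h.getD i 0

/-- The set `S` of picked vertices fills some edge of `E`. -/
def fills (E : Finset (Finset ℕ)) (S : Finset ℕ) : Prop := ∃ e ∈ E, e ⊆ S

/-- The game is over: some player has picked all the vertices of one of their edges. -/
def ended (G : Game) (s : Player) (h : List ℕ) : Prop :=
  fills G.EL (picked s .L h) ∨ fills G.ER (picked s .R h)

/-- `h` is a legal history: no vertex is picked twice, every picked vertex belongs to
the board, and no move is made after the game has ended. -/
def ValidHist (G : Game) (s : Player) (h : List ℕ) : Prop :=
  h.Nodup ∧ (∀ x ∈ h, x ∈ G.V) ∧ ∀ k, k < h.length → ¬ ended G s (h.take k)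

/-- A strategy: a map assigning to each position (history) a vertex to pick. -/
abbrev Strategy := List ℕ → ℕ

/-- Along `h`, every move of player `p` agrees with the strategy `σ`. -/
def Follows (s p : Player) (σ : Strategy) (h : List ℕ) : Prop :=
  ∀ k, k < h.length → mover s k = p → h.getD k 0 = σ (h.take k)

/-- A finished play: either the game has ended or all vertices have been picked. -/
def Complete (G : Game) (s : Player) (h : List ℕ) : Prop :=
  ended G s h ∨ h.length = G.V.card

/-- The strategy `σ` of player `p` always suggests a legal move (an unpicked vertex)
whenever the game is not over and it is `p`'s turn. -/
def Legal (G : Game) (s p : Player) (σ : Strategy) : Prop :=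
  ∀ h, ValidHist G s h → Follows s p σ h → ¬ ended G s h → h.length < G.V.card →
    mover s h.length = p → σ h ∈ G.V ∧ σ h ∉ h

/-- Player `p` has a winning strategy on `G` when `s` moves first: following it,
every finished play ends with `p` having filled one of their edges (and, the game
having ended right there, the opponent has not filled an edge first). -/
def WinsAs (G : Game) (s p : Player) : Prop :=
  ∃ σ : Strategy, Legal G s p σ ∧
    ∀ h, ValidHist G s h → Follows s p σ h → Complete G s h →
      fills (G.edges p) (picked s p h)

/-- Player `p` has a non-losing strategy on `G` when `s` moves first: following it,
the opponent never fills one of their edges. -/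
def NonLosingAs (G : Game) (s p : Player) : Prop :=
  ∃ σ : Strategy, Legal G s p σ ∧
    ∀ h, ValidHist G s h → Follows s p σ h → Complete G s h →
      ¬ fills (G.edges p.other) (picked s p.other h)

/-- The possible results of the game, for a fixed starting player. -/
inductive Result : Type
  | Lwin : Result
  | draw : Result
  | Rwin : Result
deriving DecidableEq, Repr

/-- The result of `G` with optimal play, when `s` moves first, is `r`:
a win for a player means that player has a winning strategy, a draw means
both players have non-losing strategies. -/
def resultIs (G : Game) (s : Player) : Result → Prop
  | .Lwin => WinsAs G s .L
  | .Rwin => WinsAs G s .R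
  | .draw => NonLosingAs G s .L ∧ NonLosingAs G s .R

/-- An outcome: the pair of results with optimal play
(when Left starts, when Right starts). -/
abbrev Outcome := Result × Result

/-- `G` has outcome `o`. -/
def hasOutcome (G : Game) (o : Outcome) : Prop :=
  resultIs G .L o.1 ∧ resultIs G .R o.2

/-- Numerical value of a result, from Left's point of view:
Right wins < draw < Left wins. -/
def Result.val : Result → ℕ
  | .Rwin => 0
  | .draw => 1
  | .Lwin => 2

/-- The partial order `≤_L` on outcomes, comparing both components simultaneously
from Left's point of view. -/
def outLE (o o' : Outcome) : Prop := o.1.val ≤ o'.1.val ∧ o.2.val ≤ o'.2.val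

def oL : Outcome := (.Lwin, .Lwin)
def oLminus : Outcome := (.Lwin, .draw)
def oN : Outcome := (.Lwin, .Rwin)
def oD : Outcome := (.draw, .draw)
def oRminus : Outcome := (.draw, .Rwin)
def oR : Outcome := (.Rwin, .Rwin)

/-- The updated game `G_u` after Left has picked `u`. -/
def subL (G : Game) (u : ℕ) : Game where
  V := G.V.erase u
  EL := G.EL.image fun e => e.erase u
  ER := G.ER.filter fun e => u ∉ e

/-- The updated game `G^u` after Right has picked `u`. -/
def subR (G : Game) (u : ℕ) : Game where
  V := G.V.erase u
  EL := G.EL.filter fun e => u ∉ e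
  ER := G.ER.image fun e => e.erase u

/-- The updated game `G_u^v` after Left has picked `u` and Right has picked `v`. -/
def updLR (G : Game) (u v : ℕ) : Game where
  V := (G.V.erase u).erase v
  EL := (G.EL.filter fun e => v ∉ e).image fun e => e.erase u
  ER := (G.ER.filter fun e => u ∉ e).image fun e => e.erase v

/-- The disjoint union of two games. -/
def gunion (G G' : Game) : Game where
  V := G.V ∪ G'.V
  EL := G.EL ∪ G'.EL
  ER := G.ER ∪ G'.ER

/-!
Passing never helps the opponent, so a win can always be forced even against an opponent who may
pass, and a forced win has a cost: the number of opponent passes it may have to wait for. In a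
disjoint union, a move in the other component is a pass, which has two consequences.

* A player who wins the union with the opponent moving first can still do so when the opponent
  always answers in the component just played, so must win one component moving first or the
  other one moving second. The draws in `o(G) = L⁻` and `o(G') = R⁻` exclude this.
* If Left wins `G` moving first at cost `n` and Right wins `G'` moving first at cost `n'`, then
  Left wins the union moving first when `n ≤ n'`, and Right does when `n' ≤ n`. In the first case
  Left attacks in `G` and answers a move of Right in `G'` only when some answer there prevents
  Right's cost from dropping; otherwise the attack in `G` advances by one pass as well.
-/

@[simp] theorem Player.other_other (p : Player) : p.other.other = p := by cases p <;> rfl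

@[simp] theorem Player.other_ne (p : Player) : p.other ≠ p := by cases p <;> decide

@[simp] theorem Player.ne_other (p : Player) : p ≠ p.other := p.other_ne.symm

theorem Player.eq_or_eq_other (p q : Player) : q = p ∨ q = p.other := by
  cases p <;> cases q <;> simp [Player.other]

theorem WellFormed.subset {G : Game} (hG : WellFormed G) {p : Player} {e : Finset ℕ}
    (he : e ∈ G.edges p) : e ⊆ G.V := by
  cases p
  · exact (hG.1 e he).1
  · exact (hG.2 e he).1

theorem WellFormed.not_fills_empty {G : Game} (hG : WellFormed G) (p : Player) :
    ¬ fills (G.edges p) ∅ := by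
  rintro ⟨e, he, he_empty⟩
  have he_nonempty : e.Nonempty := by
    cases p
    · exact (hG.1 e he).2
    · exact (hG.2 e he).2
  exact he_nonempty.ne_empty (Finset.subset_empty.mp he_empty)

theorem WellFormed.fills_mono {G : Game} (hG : WellFormed G) {p : Player} {S T : Finset ℕ}
    (hST : ∀ x ∈ G.V, x ∈ S → x ∈ T) (hS : fills (G.edges p) S) : fills (G.edges p) T := by
  obtain ⟨e, he, heS⟩ := hS
  exact ⟨e, he, fun x hx => hST x (hG.subset he hx) (heS hx)⟩

theorem WellFormed.fills_insert_iff {G : Game} (hG : WellFormed G) {p : Player} {S : Finset ℕ}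
    {v : ℕ} (hv : v ∉ G.V) : fills (G.edges p) (insert v S) ↔ fills (G.edges p) S :=
  ⟨hG.fills_mono (by grind), hG.fills_mono (by grind)⟩

/-- The vertices still available in the position where the players have picked `A` and `B`. -/
def Game.free (G : Game) (A B : Finset ℕ) : Finset ℕ := G.V \ (A ∪ B)

theorem Game.mem_free {G : Game} {A B : Finset ℕ} {v : ℕ} :
    v ∈ G.free A B ↔ v ∈ G.V ∧ v ∉ A ∧ v ∉ B := by
  simp [free]

theorem Game.free_comm (G : Game) (A B : Finset ℕ) : G.free A B = G.free B A := by
  rw [free, free, Finset.union_comm]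

/-! ### Forcing a win against an opponent who may pass -/

/-- In the position where player `p` has picked `A`, the opponent has picked `B` and `q` is to
move, `p` can fill an edge first, against an opponent who is allowed to pass, before the
opponent passes for the `(n + 1)`-st time. Answers to actual moves do not consume the budget. -/
inductive ForcesWithin (G : Game) (p : Player) : Player → ℕ → Finset ℕ → Finset ℕ → Prop
  | filled {q : Player} {n : ℕ} {A B : Finset ℕ} (hA : fills (G.edges p) A) :
      ForcesWithin G p q n A B
  | move {n : ℕ} {A B : Finset ℕ} {v : ℕ} (hB : ¬ fills (G.edges p.other) B)
      (hv : v ∈ G.free A B) (hnext : ForcesWithin G p p.other n (insert v A) B) :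
      ForcesWithin G p p n A B
  | reply {n : ℕ} {A B : Finset ℕ}
      (hreply : ∀ w ∈ G.free A B, ForcesWithin G p p (n + 1) A (insert w B))
      (hpass : ForcesWithin G p p n A B) : ForcesWithin G p p.other (n + 1) A B

/-- With `q` to move, `p` can force a win even if the opponent may pass. -/
def Forces (G : Game) (p q : Player) (A B : Finset ℕ) : Prop := ∃ n, ForcesWithin G p q n A B

section Forcing

variable {G : Game} {p q : Player} {m n : ℕ} {A A' B B' : Finset ℕ}

theorem ForcesWithin.exists_move (h : ForcesWithin G p p n A B) (hA : ¬ fills (G.edges p) A) :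
    ¬ fills (G.edges p.other) B ∧
      ∃ v ∈ G.free A B, ForcesWithin G p p.other n (insert v A) B := by
  obtain ⟨q, hq, h⟩ : ∃ q, q = p ∧ ForcesWithin G p q n A B := ⟨p, rfl, h⟩
  cases h with
  | filled h => exact absurd h hA
  | move hB hv hnext => exact ⟨hB, _, hv, hnext⟩
  | reply => exact absurd hq p.other_ne

theorem ForcesWithin.exists_budget (h : ForcesWithin G p p.other n A B)
    (hA : ¬ fills (G.edges p) A) :
    ∃ m, n = m + 1 ∧ (∀ w ∈ G.free A B, ForcesWithin G p p (m + 1) A (insert w B)) ∧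
      ForcesWithin G p p m A B := by
  obtain ⟨q, hq, h⟩ : ∃ q, q = p.other ∧ ForcesWithin G p q n A B := ⟨p.other, rfl, h⟩
  cases h with
  | filled h => exact absurd h hA
  | move => exact absurd hq.symm p.other_ne
  | reply hreply hpass => exact ⟨_, rfl, hreply, hpass⟩

theorem ForcesWithin.mono (hG : WellFormed G) (h : ForcesWithin G p q m A B) (hmn : m ≤ n)
    (hA : ∀ x ∈ G.V, x ∈ A ↔ x ∈ A') (hB : ∀ x ∈ G.V, x ∈ B' → x ∈ B) :
    ForcesWithin G p q n A' B' := by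
  induction h generalizing n A' B' with
  | filled h => exact .filled (hG.fills_mono (fun x hx => (hA x hx).mp) h)
  | @move m A B v hB_unfilled hv _ ih =>
    rw [Game.mem_free] at hv
    refine .move (fun h => hB_unfilled (hG.fills_mono hB h)) (v := v) ?_ (ih hmn ?_ hB)
    · rw [Game.mem_free]; grind
    · grind
  | @reply m A B _ _ ih_reply ih_pass =>
    obtain ⟨n, rfl⟩ : ∃ k, n = k + 1 := ⟨n - 1, by omega⟩
    refine .reply (fun w hw => ?_) (ih_pass (by omega) hA hB)
    rw [Game.mem_free] at hw
    -- A reply that the opponent already owns on the larger side amounts to a pass.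
    by_cases hwB : w ∈ B
    · exact ih_pass (by omega) hA (by grind)
    · exact ih_reply w (Game.mem_free.mpr (by grind)) hmn hA (by grind)

theorem ForcesWithin.mono_budget (hG : WellFormed G) (h : ForcesWithin G p q m A B)
    (hmn : m ≤ n) : ForcesWithin G p q n A B :=
  h.mono hG hmn (fun _ _ => Iff.rfl) fun _ _ => id

theorem forcesWithin_insert_left_iff (hG : WellFormed G) {v : ℕ} (hv : v ∉ G.V) :
    ForcesWithin G p q n (insert v A) B ↔ ForcesWithin G p q n A B :=
  ⟨fun h => h.mono hG le_rfl (by grind) (by grind),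
    fun h => h.mono hG le_rfl (by grind) (by grind)⟩

theorem forcesWithin_insert_right_iff (hG : WellFormed G) {w : ℕ} (hw : w ∉ G.V) :
    ForcesWithin G p q n A (insert w B) ↔ ForcesWithin G p q n A B :=
  ⟨fun h => h.mono hG le_rfl (by grind) (by grind),
    fun h => h.mono hG le_rfl (by grind) (by grind)⟩

theorem ForcesWithin.not_fills_other (h : ForcesWithin G p q n A B)
    (hA : ¬ fills (G.edges p) A) : ¬ fills (G.edges p.other) B := by
  induction h with
  | filled h => exact absurd h hA
  | move hB => exact hB
  | reply _ _ _ ih_pass => exact ih_pass hA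

theorem ForcesWithin.fills_of_free_eq_empty (h : ForcesWithin G p q n A B)
    (hfree : G.free A B = ∅) : fills (G.edges p) A := by
  induction h with
  | filled h => exact h
  | move _ hv => simp [hfree] at hv
  | reply _ _ _ ih_pass => exact ih_pass hfree

theorem exists_reply_or_pass_of_not_forcesWithin (hG : WellFormed G)
    (h : ¬ ForcesWithin G p p.other n A B) :
    (∃ w ∈ G.free A B, ¬ ForcesWithin G p p n A (insert w B)) ∨
      ∀ m < n, ¬ ForcesWithin G p p m A B := by
  by_contra! ⟨hreply, m, hmn, hpass⟩
  obtain ⟨k, rfl⟩ : ∃ k, n = k + 1 := ⟨n - 1, by omega⟩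
  exact h (.reply hreply (hpass.mono_budget hG (by omega)))

theorem Forces.exists_move (h : Forces G p p A B) (hA : ¬ fills (G.edges p) A) :
    ∃ v ∈ G.free A B, Forces G p p.other (insert v A) B := by
  obtain ⟨n, h⟩ := h
  obtain ⟨-, v, hv, hnext⟩ := h.exists_move hA
  exact ⟨v, hv, n, hnext⟩

theorem Forces.insert_right (h : Forces G p p.other A B) (hA : ¬ fills (G.edges p) A)
    {w : ℕ} (hw : w ∈ G.free A B) : Forces G p p A (insert w B) := by
  obtain ⟨n, h⟩ := h
  obtain ⟨m, -, hreply, -⟩ := h.exists_budget hA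
  exact ⟨m + 1, hreply w hw⟩

theorem Forces.of_insert_right (hG : WellFormed G) {w : ℕ} (h : Forces G p q A (insert w B)) :
    Forces G p q A B := by
  obtain ⟨n, h⟩ := h
  exact ⟨n, h.mono hG le_rfl (fun _ _ => Iff.rfl) fun _ _ => Finset.mem_insert_of_mem⟩

theorem Forces.of_move (hB : ¬ fills (G.edges p.other) B) {v : ℕ} (hv : v ∈ G.free A B)
    (h : Forces G p p.other (insert v A) B) : Forces G p p A B := by
  obtain ⟨n, h⟩ := h
  exact ⟨n, .move hB hv h⟩

theorem Forces.of_replies (hG : WellFormed G)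
    (hreply : ∀ w ∈ G.free A B, Forces G p p A (insert w B)) (hpass : Forces G p p A B) :
    Forces G p p.other A B := by
  choose! budget hbudget using hreply
  obtain ⟨m, hpass⟩ := hpass
  refine ⟨max m ((G.free A B).sup budget) + 1, .reply (fun w hw => ?_)
    (hpass.mono_budget hG (le_max_left _ _))⟩
  have := Finset.le_sup (f := budget) hw
  exact (hbudget w hw).mono_budget hG (by omega)

end Forcing

/-! ### Histories and strategies -/

theorem mover_succ (s : Player) (n : ℕ) : mover s (n + 1) = (mover s n).other := by
  rcases Nat.mod_two_eq_zero_or_one n with h | h <;> simp [mover, Nat.add_mod, h]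

@[simp] theorem picked_nil (s p : Player) : picked s p [] = ∅ := rfl

theorem picked_concat (s p : Player) (h : List ℕ) (x : ℕ) :
    picked s p (h ++ [x]) =
      if mover s h.length = p then insert x (picked s p h) else picked s p h := by
  have getD_eq : Set.EqOn (fun i => (h ++ [x]).getD i 0) (fun i => h.getD i 0)
      ((Finset.range h.length).filter fun i => mover s i = p) := fun i hi =>
    List.getD_append _ _ _ _ (Finset.mem_range.mp (Finset.mem_filter.mp hi).1)
  simp only [picked, List.length_append, List.length_singleton, Finset.range_add_one,
    Finset.filter_insert]
  split_ifs
  · rw [Finset.image_insert, Finset.image_congr getD_eq]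
    simp
  · exact Finset.image_congr getD_eq

theorem mem_iff_mem_picked (s p : Player) (h : List ℕ) (x : ℕ) :
    x ∈ h ↔ x ∈ picked s p h ∨ x ∈ picked s p.other h := by
  induction h using List.reverseRecOn with
  | nil => simp
  | append_singleton h y ih =>
    rw [picked_concat, picked_concat, List.mem_append, ih, List.mem_singleton]
    rcases p.eq_or_eq_other (mover s h.length) with hm | hm <;> simp [hm, eq_comm] <;> tauto

theorem Game.mem_free_picked {G : Game} {s p : Player} {h : List ℕ} {v : ℕ} :
    v ∈ G.free (picked s p h) (picked s p.other h) ↔ v ∈ G.V ∧ v ∉ h := by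
  rw [mem_free, mem_iff_mem_picked s p, not_or]

theorem ended_iff (G : Game) (s p : Player) (h : List ℕ) :
    ended G s h ↔ fills (G.edges p) (picked s p h) ∨
      fills (G.edges p.other) (picked s p.other h) := by
  cases p
  · rfl
  · exact or_comm

theorem validHist_nil (G : Game) (s : Player) : ValidHist G s [] := by simp [ValidHist]

theorem validHist_concat {G : Game} {s : Player} {h : List ℕ} {x : ℕ} :
    ValidHist G s (h ++ [x]) ↔ ValidHist G s h ∧ ¬ ended G s h ∧ x ∈ G.V ∧ x ∉ h := by
  have take_eq : ∀ k < h.length, (h ++ [x]).take k = h.take k := fun k hk =>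
    List.take_append_of_le_length hk.le
  have ended_iff : (∀ k < (h ++ [x]).length, ¬ ended G s ((h ++ [x]).take k)) ↔
      (∀ k < h.length, ¬ ended G s (h.take k)) ∧ ¬ ended G s h := by
    rw [List.length_append, List.length_singleton, Nat.forall_lt_succ_right]
    simp +contextual [take_eq]
  rw [ValidHist, ValidHist, ended_iff, ← List.concat_eq_append, List.nodup_concat]
  simp only [List.concat_eq_append, List.forall_mem_append, List.forall_mem_singleton]
  tauto

theorem follows_nil (s p : Player) (σ : Strategy) : Follows s p σ [] := by simp [Follows]

theorem follows_concat {s p : Player} {σ : Strategy} {h : List ℕ} {x : ℕ} :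
    Follows s p σ (h ++ [x]) ↔ Follows s p σ h ∧ (mover s h.length = p → x = σ h) := by
  have take_eq : ∀ k < h.length, (h ++ [x]).take k = h.take k := fun k hk =>
    List.take_append_of_le_length hk.le
  have getD_eq : ∀ k < h.length, (h ++ [x]).getD k 0 = h.getD k 0 := fun k hk =>
    List.getD_append _ _ _ _ hk
  simp +contextual only [Follows, List.length_append, List.length_singleton,
    Nat.forall_lt_succ_right, take_eq, getD_eq]
  simp

theorem exists_mem_notMem_of_length_lt_card {α : Type*} {V : Finset α} {h : List α}
    (hlt : h.length < V.card) : ∃ v ∈ V, v ∉ h := by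
  classical
  obtain ⟨v, hv, hvh⟩ := Finset.exists_mem_notMem_of_card_lt_card
    ((List.toFinset_card_le h).trans_lt hlt)
  exact ⟨v, hv, by simpa using hvh⟩

theorem ValidHist.toFinset_subset {G : Game} {s : Player} {h : List ℕ} (hv : ValidHist G s h) :
    h.toFinset ⊆ G.V :=
  fun x hx => hv.2.1 x (List.mem_toFinset.mp hx)

theorem ValidHist.length_le_card {G : Game} {s : Player} {h : List ℕ} (hv : ValidHist G s h) :
    h.length ≤ G.V.card := by
  rw [← List.toFinset_card_of_nodup hv.1]
  exact Finset.card_le_card hv.toFinset_subset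

theorem ValidHist.mem_of_length_eq_card {G : Game} {s : Player} {h : List ℕ}
    (hv : ValidHist G s h) (hlen : h.length = G.V.card) {v : ℕ} (hvV : v ∈ G.V) : v ∈ h := by
  have : h.toFinset = G.V := Finset.eq_of_subset_of_card_le hv.toFinset_subset
    (by rw [List.toFinset_card_of_nodup hv.1, hlen])
  rwa [← this, List.mem_toFinset] at hvV

/-! ### Determinacy -/

theorem exists_complete_of_legal {G : Game} {s p : Player} {σ τ : Strategy}
    (hσ : Legal G s p σ) (hτ : Legal G s p.other τ) :
    ∃ h, ValidHist G s h ∧ Follows s p σ h ∧ Follows s p.other τ h ∧ Complete G s h := by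
  suffices extend : ∀ k h, G.V.card - h.length = k → ValidHist G s h → Follows s p σ h →
      Follows s p.other τ h →
      ∃ h, ValidHist G s h ∧ Follows s p σ h ∧ Follows s p.other τ h ∧ Complete G s h from
    extend _ [] rfl (validHist_nil G s) (follows_nil s p σ) (follows_nil s p.other τ)
  intro k
  induction k with
  | zero =>
    intro h hk hv hfσ hfτ
    exact ⟨h, hv, hfσ, hfτ, .inr (by have := hv.length_le_card; omega)⟩
  | succ k ih =>
    intro h hk hv hfσ hfτ
    by_cases hend : ended G s h
    · exact ⟨h, hv, hfσ, hfτ, .inl hend⟩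
    obtain ⟨x, hx, hfσx, hfτx⟩ : ∃ x, (x ∈ G.V ∧ x ∉ h) ∧
        (mover s h.length = p → x = σ h) ∧ (mover s h.length = p.other → x = τ h) := by
      rcases p.eq_or_eq_other (mover s h.length) with hm | hm
      · exact ⟨σ h, hσ h hv hfσ hend (by omega) hm, fun _ => rfl,
          fun hm' => absurd (hm'.symm.trans hm) p.other_ne⟩
      · exact ⟨τ h, hτ h hv hfτ hend (by omega) hm,
          fun hm' => absurd (hm.symm.trans hm') p.other_ne, fun _ => rfl⟩
    exact ih (h ++ [x]) (by simp; omega) (validHist_concat.mpr ⟨hv, hend, hx⟩)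
      (follows_concat.mpr ⟨hfσ, hfσx⟩) (follows_concat.mpr ⟨hfτ, hfτx⟩)

theorem WinsAs.not_nonLosingAs_other {G : Game} {s p : Player} (h : WinsAs G s p) :
    ¬ NonLosingAs G s p.other := by
  rintro ⟨τ, hτ, hτ_safe⟩
  obtain ⟨σ, hσ, hσ_wins⟩ := h
  obtain ⟨h, hv, hfσ, hfτ, hc⟩ := exists_complete_of_legal hσ hτ
  have hsafe := hτ_safe h hv hfτ hc
  rw [Player.other_other] at hsafe
  exact hsafe (hσ_wins h hv hfσ hc)

/-- `p` can maintain the property `J` of positions, whose arguments are the player to move,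
the vertices picked by `p` and those picked by the opponent, as long as the game goes on. -/
structure Maintainable (G : Game) (p : Player) (J : Player → Finset ℕ → Finset ℕ → Prop) :
    Prop where
  exists_move : ∀ A B, J p A B → ¬ fills (G.edges p) A → ¬ fills (G.edges p.other) B →
    (G.free A B).Nonempty → ∃ v ∈ G.free A B, J p.other (insert v A) B
  insert_right : ∀ A B, J p.other A B → ¬ fills (G.edges p) A → ¬ fills (G.edges p.other) B →
    ∀ w ∈ G.free A B, J p A (insert w B)

theorem Maintainable.exists_legal_move {G : Game} {p : Player}
    {J : Player → Finset ℕ → Finset ℕ → Prop} (hJ : Maintainable G p J) {s : Player}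
    {h : List ℕ} (hend : ¬ ended G s h) (hfree : ∃ x ∈ G.V, x ∉ h)
    (hJh : J p (picked s p h) (picked s p.other h)) :
    ∃ v, (v ∈ G.V ∧ v ∉ h) ∧ J p.other (insert v (picked s p h)) (picked s p.other h) := by
  obtain ⟨x, hx⟩ := hfree
  rw [ended_iff G s p, not_or] at hend
  obtain ⟨v, hv, hJv⟩ := hJ.exists_move _ _ hJh hend.1 hend.2 ⟨x, Game.mem_free_picked.mpr hx⟩
  exact ⟨v, Game.mem_free_picked.mp hv, hJv⟩

theorem Maintainable.exists_strategy {G : Game} {p : Player}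
    {J : Player → Finset ℕ → Finset ℕ → Prop} (hJ : Maintainable G p J) {s : Player}
    (hstart : J s ∅ ∅) :
    ∃ σ : Strategy, Legal G s p σ ∧ ∀ h, ValidHist G s h → Follows s p σ h →
      J (mover s h.length) (picked s p h) (picked s p.other h) := by
  choose! σ hσ using fun h => hJ.exists_legal_move (s := s) (h := h)
  have maintained : ∀ h, ValidHist G s h → Follows s p σ h →
      J (mover s h.length) (picked s p h) (picked s p.other h) := by
    intro h
    induction h using List.reverseRecOn with
    | nil => intro _ _; simpa [mover] using hstart
    | append_singleton h x ih =>
      intro hv hf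
      obtain ⟨hv, hend, hx⟩ := validHist_concat.mp hv
      obtain ⟨hf, hfx⟩ := follows_concat.mp hf
      have hJh := ih hv hf
      rw [picked_concat, picked_concat, List.length_append, List.length_singleton, mover_succ]
      rcases p.eq_or_eq_other (mover s h.length) with hm | hm
      · rw [hm] at hJh
        simpa [hm, ← hfx hm] using (hσ h hend ⟨x, hx⟩ hJh).2
      · rw [hm] at hJh
        rw [ended_iff G s p, not_or] at hend
        simpa [hm] using hJ.insert_right _ _ hJh hend.1 hend.2 x (Game.mem_free_picked.mpr hx)
  refine ⟨σ, fun h hv hf hend hlt hm => ?_, maintained⟩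
  exact (hσ h hend (exists_mem_notMem_of_length_lt_card hlt) (hm ▸ maintained h hv hf)).1

theorem maintainable_forces (G : Game) (p : Player) : Maintainable G p (Forces G p) where
  exists_move _ _ h hA _ _ := h.exists_move hA
  insert_right _ _ h hA _ _ hw := h.insert_right hA hw

theorem maintainable_not_forces_other {G : Game} (hG : WellFormed G) (p : Player) :
    Maintainable G p fun q A B => ¬ Forces G p.other q B A where
  exists_move A B h _ _ hfree := by
    by_contra! hcon
    rw [G.free_comm] at hfree hcon
    obtain ⟨v, hv⟩ := hfree
    have hpass : Forces G p.other p.other B A := (hcon v hv).of_insert_right hG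
    exact h (by simpa using Forces.of_replies hG hcon hpass)
  insert_right A B h hA _ w hw hforces := by
    rw [G.free_comm] at hw
    exact h (.of_move (by simpa using hA) hw (by simpa using hforces))

theorem Forces.winsAs {G : Game} {s p : Player} (h : Forces G p s ∅ ∅) : WinsAs G s p := by
  obtain ⟨σ, hσ, hforces⟩ := (maintainable_forces G p).exists_strategy h
  refine ⟨σ, hσ, fun h hv hf hc => ?_⟩
  obtain ⟨n, hn⟩ := hforces h hv hf
  rcases hc with hend | hlen
  · by_contra hA
    exact hn.not_fills_other hA (((ended_iff G s p h).mp hend).resolve_left hA)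
  · refine hn.fills_of_free_eq_empty (Finset.eq_empty_of_forall_notMem fun v hvfree => ?_)
    obtain ⟨hvV, hvh⟩ := Game.mem_free_picked.mp hvfree
    exact hvh (hv.mem_of_length_eq_card hlen hvV)

theorem nonLosingAs_of_not_forces_other {G : Game} (hG : WellFormed G) {s p : Player}
    (h : ¬ Forces G p.other s ∅ ∅) : NonLosingAs G s p := by
  obtain ⟨σ, hσ, hsafe⟩ := (maintainable_not_forces_other hG p).exists_strategy h
  exact ⟨σ, hσ, fun h hv hf _ hfills => hsafe h hv hf ⟨0, .filled hfills⟩⟩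

theorem winsAs_iff_forces {G : Game} (hG : WellFormed G) {s p : Player} :
    WinsAs G s p ↔ Forces G p s ∅ ∅ := by
  refine ⟨fun h => ?_, Forces.winsAs⟩
  by_contra hn
  exact h.not_nonLosingAs_other (nonLosingAs_of_not_forces_other hG (by simpa using hn))

theorem nonLosingAs_iff_not_forces_other {G : Game} (hG : WellFormed G) {s p : Player} :
    NonLosingAs G s p ↔ ¬ Forces G p.other s ∅ ∅ :=
  ⟨fun h hf => hf.winsAs.not_nonLosingAs_other (by simpa using h),
    nonLosingAs_of_not_forces_other hG⟩

theorem hasOutcome_oLminus_iff {G : Game} (hG : WellFormed G) :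
    hasOutcome G oLminus ↔ Forces G .L .L ∅ ∅ ∧ ¬ Forces G .R .R ∅ ∅ ∧ ¬ Forces G .L .R ∅ ∅ := by
  simp only [hasOutcome, oLminus, resultIs, winsAs_iff_forces hG,
    nonLosingAs_iff_not_forces_other hG, Player.other]

theorem hasOutcome_oN_iff {G : Game} (hG : WellFormed G) :
    hasOutcome G oN ↔ Forces G .L .L ∅ ∅ ∧ Forces G .R .R ∅ ∅ := by
  simp only [hasOutcome, oN, resultIs, winsAs_iff_forces hG]

theorem hasOutcome_oRminus_iff {G : Game} (hG : WellFormed G) :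
    hasOutcome G oRminus ↔ (¬ Forces G .R .L ∅ ∅ ∧ ¬ Forces G .L .L ∅ ∅) ∧ Forces G .R .R ∅ ∅ := by
  simp only [hasOutcome, oRminus, resultIs, winsAs_iff_forces hG,
    nonLosingAs_iff_not_forces_other hG, Player.other]

/-! ### Disjoint unions -/

theorem gunion_comm (G G' : Game) : gunion G G' = gunion G' G := by
  simp [gunion, Finset.union_comm]

theorem fills_gunion {G G' : Game} {p : Player} {S : Finset ℕ} :
    fills ((gunion G G').edges p) S ↔ fills (G.edges p) S ∨ fills (G'.edges p) S := by
  cases p <;> simp [fills, gunion, Game.edges, or_and_right, exists_or]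

theorem mem_free_gunion {G G' : Game} {A B : Finset ℕ} {v : ℕ} :
    v ∈ (gunion G G').free A B ↔ v ∈ G.free A B ∨ v ∈ G'.free A B := by
  simp only [Game.mem_free, gunion, Finset.mem_union, or_and_right]

theorem WellFormed.gunion {G G' : Game} (hG : WellFormed G) (hG' : WellFormed G') :
    WellFormed (gunion G G') := by
  constructor <;> intro e he <;> rcases Finset.mem_union.mp he with he | he
  · exact ⟨(hG.1 e he).1.trans Finset.subset_union_left, (hG.1 e he).2⟩
  · exact ⟨(hG'.1 e he).1.trans Finset.subset_union_right, (hG'.1 e he).2⟩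
  · exact ⟨(hG.2 e he).1.trans Finset.subset_union_left, (hG.2 e he).2⟩
  · exact ⟨(hG'.2 e he).1.trans Finset.subset_union_right, (hG'.2 e he).2⟩

section Gunion

variable {G G' : Game} {p q : Player} {n : ℕ} {A B : Finset ℕ}

theorem Forces.of_gunion (hG : WellFormed G) (hG' : WellFormed G')
    (hdisj : Disjoint G.V G'.V) (h : Forces (gunion G G') p q A B) :
    Forces G p q A B ∨ Forces G' p p A B := by
  obtain ⟨n, h⟩ := h
  generalize hU : gunion G G' = U at h
  induction h generalizing G G' with
  | filled hA =>
    rw [← hU, fills_gunion] at hA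
    exact hA.imp (fun h => ⟨0, .filled h⟩) (fun h => ⟨0, .filled h⟩)
  | @move _ A B v hB hv _ ih =>
    wlog hvG : v ∈ G.free A B generalizing G G'
    · have hvG' := (mem_free_gunion.mp (hU ▸ hv)).resolve_left hvG
      exact (this hG' hG hdisj.symm (gunion_comm G' G ▸ hU) hvG').symm
    rw [← hU, fills_gunion, not_or] at hB
    have hvG' : v ∉ G'.V := Finset.disjoint_left.mp hdisj (Game.mem_free.mp hvG).1
    refine (ih hG hG' hdisj hU).imp (Forces.of_move hB.1 hvG) fun ⟨k, hk⟩ => ?_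
    exact ⟨k, (forcesWithin_insert_left_iff hG' hvG').mp hk⟩
  | reply _ _ ih_reply ih_pass =>
    refine or_iff_not_imp_right.mpr fun hnot => .of_replies hG (fun w hw => ?_)
      ((ih_pass hG hG' hdisj hU).resolve_right hnot)
    exact (ih_reply w (hU ▸ mem_free_gunion.mpr (.inl hw)) hG hG' hdisj hU).resolve_right
      fun h => hnot (h.of_insert_right hG')

/-- With the opponent to move, `p` is ahead in the race where `p` attacks in `G` and the opponent
in `G'`: for some `n`, `p` needs at most `n` passes in `G`, while the opponent needs at least `n`
in `G'`. -/
def Ahead (G G' : Game) (p : Player) (A B : Finset ℕ) : Prop :=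
  ∃ n, ForcesWithin G p p.other n A B ∧ ∀ m < n, ¬ ForcesWithin G' p.other p.other m B A

/-- With `p` to move, the game is not lost yet and `p` has a move after which `p` is ahead. -/
def CanMoveAhead (G G' : Game) (p : Player) (A B : Finset ℕ) : Prop :=
  ¬ fills ((gunion G G').edges p.other) B ∧
    ∃ v ∈ (gunion G G').free A B, Ahead G G' p (insert v A) B

theorem ForcesWithin.canMoveAhead (hG' : WellFormed G') (hdisj : Disjoint G.V G'.V)
    (h : ForcesWithin G p p n A B) (h' : ∀ m < n, ¬ ForcesWithin G' p.other p.other m B A)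
    (hA : ¬ fills (G.edges p) A) (hB : ¬ fills (G'.edges p.other) B) :
    CanMoveAhead G G' p A B := by
  obtain ⟨hBG, v, hv, hnext⟩ := h.exists_move hA
  have hvG' : v ∉ G'.V := Finset.disjoint_left.mp hdisj (Game.mem_free.mp hv).1
  refine ⟨fills_gunion.not.mpr (not_or.mpr ⟨hBG, hB⟩), v, mem_free_gunion.mpr (.inl hv),
    n, hnext, fun m hm => ?_⟩
  rw [forcesWithin_insert_right_iff hG' hvG']
  exact h' m hm

theorem Ahead.canMoveAhead_of_pass (hG' : WellFormed G') (hdisj : Disjoint G.V G'.V)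
    (h : Ahead G G' p A B) (hA : ¬ fills ((gunion G G').edges p) A) :
    CanMoveAhead G G' p A B := by
  obtain ⟨n, hn, hrace⟩ := h
  rw [fills_gunion, not_or] at hA
  obtain ⟨m, rfl, -, hpass⟩ := hn.exists_budget hA.1
  exact hpass.canMoveAhead hG' hdisj (fun k hk => hrace k (by omega)) hA.1
    fun hB => hrace 0 (by omega) (.filled hB)

theorem Ahead.canMoveAhead_insert_left (hG' : WellFormed G') (hdisj : Disjoint G.V G'.V)
    (h : Ahead G G' p A B) (hA : ¬ fills ((gunion G G').edges p) A) {w : ℕ}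
    (hw : w ∈ G.free A B) :
    CanMoveAhead G G' p A (insert w B) := by
  obtain ⟨n, hn, hrace⟩ := h
  rw [fills_gunion, not_or] at hA
  obtain ⟨m, rfl, hreply, -⟩ := hn.exists_budget hA.1
  have hwG' : w ∉ G'.V := Finset.disjoint_left.mp hdisj (Game.mem_free.mp hw).1
  refine (hreply w hw).canMoveAhead hG' hdisj (fun k hk => ?_) hA.1
    fun hB => hrace 0 (by omega) (.filled ((hG'.fills_insert_iff hwG').mp hB))
  rw [forcesWithin_insert_left_iff hG' hwG']
  exact hrace k hk

theorem Ahead.canMoveAhead_insert_right (hG : WellFormed G) (hG' : WellFormed G')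
    (hdisj : Disjoint G.V G'.V) (h : Ahead G G' p A B)
    (hA : ¬ fills ((gunion G G').edges p) A) {w : ℕ} (hw : w ∈ G'.free A B) :
    CanMoveAhead G G' p A (insert w B) := by
  obtain ⟨n, hn, hrace⟩ := h
  rw [fills_gunion, not_or] at hA
  obtain ⟨m, rfl, -, hpass⟩ := hn.exists_budget hA.1
  have hwG : w ∉ G.V := Finset.disjoint_right.mp hdisj (Game.mem_free.mp hw).1
  have hw_not_forces {k : ℕ} (hk : k < m + 1) :
      ¬ ForcesWithin G' p.other p.other.other k (insert w B) A := fun h =>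
    hrace k hk (.move (by simpa using hA.2) (G'.free_comm A B ▸ hw) h)
  have hB : ¬ fills (G'.edges p.other) (insert w B) := fun h =>
    hw_not_forces (Nat.succ_pos m) (.filled h)
  have hwpass : ForcesWithin G p p m A (insert w B) :=
    (forcesWithin_insert_right_iff hG hwG).mpr hpass
  -- `p` parries in `G'` when that keeps the opponent's budget, and otherwise goes on in `G`.
  rcases exists_reply_or_pass_of_not_forcesWithin hG' (hw_not_forces (Nat.lt_succ_self m)) with
    ⟨v, hv, hparry⟩ | hslow
  · rw [G'.free_comm] at hv
    have hvG : v ∉ G.V := Finset.disjoint_right.mp hdisj (Game.mem_free.mp hv).1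
    refine ⟨fills_gunion.not.mpr (not_or.mpr ⟨hwpass.not_fills_other hA.1, hB⟩), v,
      mem_free_gunion.mpr (.inr hv), m + 1, ?_, fun k hk hforces => ?_⟩
    · rwa [forcesWithin_insert_left_iff hG hvG, forcesWithin_insert_right_iff hG hwG]
    · exact hparry (hforces.mono_budget hG' (Nat.lt_succ_iff.mp hk))
  · exact hwpass.canMoveAhead hG' hdisj hslow hA.1 hB

theorem Ahead.forces_gunion (hG : WellFormed G) (hG' : WellFormed G')
    (hdisj : Disjoint G.V G'.V) (h : Ahead G G' p A B) :
    Forces (gunion G G') p p.other A B := by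
  induction hk : ((gunion G G').V \ A).card using Nat.strong_induction_on generalizing A B with
  | _ k ih =>
  subst hk
  by_cases hA : fills ((gunion G G').edges p) A
  · exact ⟨0, .filled hA⟩
  have forces_of_move {B : Finset ℕ} (hmove : CanMoveAhead G G' p A B) :
      Forces (gunion G G') p p A B := by
    obtain ⟨hB, v, hv, hahead⟩ := hmove
    refine .of_move hB hv (ih _ (Finset.card_lt_card ?_) hahead rfl)
    have := Game.mem_free.mp hv
    grind
  refine .of_replies (hG.gunion hG') (fun w hw => forces_of_move ?_)
    (forces_of_move (h.canMoveAhead_of_pass hG' hdisj hA))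
  rcases mem_free_gunion.mp hw with hw | hw
  · exact h.canMoveAhead_insert_left hG' hdisj hA hw
  · exact h.canMoveAhead_insert_right hG hG' hdisj hA hw

theorem ForcesWithin.forces_gunion (hG : WellFormed G) (hG' : WellFormed G')
    (hdisj : Disjoint G.V G'.V) (h : ForcesWithin G p p n A B)
    (h' : ∀ m < n, ¬ ForcesWithin G' p.other p.other m B A)
    (hB : ¬ fills (G'.edges p.other) B) : Forces (gunion G G') p p A B := by
  by_cases hA : fills (G.edges p) A
  · exact ⟨0, .filled (fills_gunion.mpr (.inl hA))⟩
  obtain ⟨hBU, v, hv, hahead⟩ := h.canMoveAhead hG' hdisj h' hA hB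
  exact .of_move hBU hv (hahead.forces_gunion hG hG' hdisj)

theorem forces_gunion_or_forces_gunion_other (hG : WellFormed G) (hG' : WellFormed G')
    (hdisj : Disjoint G.V G'.V) (h : Forces G p p A B)
    (h' : Forces G' p.other p.other B A) (hA : ¬ fills (G.edges p) A)
    (hB : ¬ fills (G'.edges p.other) B) :
    Forces (gunion G G') p p A B ∨ Forces (gunion G G') p.other p.other B A := by
  classical
  rcases le_total (Nat.find h) (Nat.find h') with hle | hle
  · exact .inl ((Nat.find_spec h).forces_gunion hG hG' hdisj
      (fun m hm => Nat.find_min h' (hm.trans_le hle)) hB)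
  · rw [gunion_comm]
    exact .inr ((Nat.find_spec h').forces_gunion hG' hG hdisj.symm
      (fun m hm => by simpa using Nat.find_min h (hm.trans_le hle)) (by simpa using hA))

end Gunion

/-- If `o(G) = L⁻` and `o(G') = R⁻`, then `o(G ∪ G') ∈ {L⁻, N, R⁻}`. -/
theorem union_Lminus_Rminus (G G' : Game) (hG : WellFormed G) (hG' : WellFormed G')
    (hdisj : Disjoint G.V G'.V)
    (hGo : hasOutcome G oLminus) (hG'o : hasOutcome G' oRminus) :
    ∃ o : Outcome, hasOutcome (gunion G G') o ∧ (o = oLminus ∨ o = oN ∨ o = oRminus) := by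
  obtain ⟨hL_first, hR_first, hL_second⟩ := (hasOutcome_oLminus_iff hG).mp hGo
  obtain ⟨⟨hR_second', hL_first'⟩, hR_first'⟩ := (hasOutcome_oRminus_iff hG').mp hG'o
  have hU := hG.gunion hG'
  have hL_second_union : ¬ Forces (gunion G G') .L .R ∅ ∅ := fun h =>
    (h.of_gunion hG hG' hdisj).elim hL_second hL_first'
  have hR_second_union : ¬ Forces (gunion G G') .R .L ∅ ∅ := fun h =>
    (Forces.of_gunion hG' hG hdisj.symm (gunion_comm G G' ▸ h)).elim hR_second' hR_first
  have hfirst : Forces (gunion G G') .L .L ∅ ∅ ∨ Forces (gunion G G') .R .R ∅ ∅ :=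
    forces_gunion_or_forces_gunion_other hG hG' hdisj hL_first hR_first'
      (hG.not_fills_empty _) (hG'.not_fills_empty _)
  by_cases hLU : Forces (gunion G G') .L .L ∅ ∅
  · by_cases hRU : Forces (gunion G G') .R .R ∅ ∅
    · exact ⟨oN, (hasOutcome_oN_iff hU).mpr ⟨hLU, hRU⟩, .inr (.inl rfl)⟩
    · exact ⟨oLminus, (hasOutcome_oLminus_iff hU).mpr ⟨hLU, hRU, hL_second_union⟩, .inl rfl⟩
  · exact ⟨oRminus, (hasOutcome_oRminus_iff hU).mpr
      ⟨⟨hR_second_union, hLU⟩, hfirst.resolve_left hLU⟩, .inr (.inr rfl)⟩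

end APG
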